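/- arXiv:2211.10075 — 3 statements merged into one kernel-verified Lean document; each statement's English description precedes it below -/
import Mathlib

section
/- Let x ∈ ℝⁿ and let u = (u_0, …, u_{N−1}) be a control sequence whose predicted terminal state satisfies x̄_N ∈ X_f. Define x⁺ = f(x, u_0) and the shifted sequence u′ = (u_1, …, u_{N−1}, κ(x̄_N)). Then J(x⁺, u′) ≤ J(x, u) − (xᵀ Q x + u_0ᵀ R u_0). -/
/-!
Appending a control `c` to a sequence of length `M` changes its cost by
`ℓ z c + V (f z c) - V z`, where `z` is the predicted terminal state; the terminal decrease
condition says that this is nonpositive. The shifted sequence is the tail of `u` with one control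
appended at `x̄_N`, and by Bellman's recursion the cost of the tail is that of `u` less its first
stage cost.
-/

open Matrix Finset

/-- Predicted trajectory of the discrete-time system `x⁺ = f(x,u)`:
`x̄_0 = x`, `x̄_{i+1} = f(x̄_i, u_i)`. -/
def mpcTraj {n m : ℕ} (f : (Fin n → ℝ) → (Fin m → ℝ) → (Fin n → ℝ))
    (x : Fin n → ℝ) (u : ℕ → Fin m → ℝ) : ℕ → Fin n → ℝ
  | 0 => x
  | i + 1 => f (mpcTraj f x u i) (u i)

/-- MPC cost `J(x,u) = Σ_{i=0}^{N−1} (x̄_iᵀ Q x̄_i + u_iᵀ R u_i) + x̄_Nᵀ P x̄_N`. -/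
noncomputable def mpcCost {n m : ℕ} (N : ℕ)
    (f : (Fin n → ℝ) → (Fin m → ℝ) → (Fin n → ℝ))
    (Q P : Matrix (Fin n) (Fin n) ℝ) (R : Matrix (Fin m) (Fin m) ℝ)
    (x : Fin n → ℝ) (u : ℕ → Fin m → ℝ) : ℝ :=
  ∑ i ∈ Finset.range N,
      (mpcTraj f x u i ⬝ᵥ Q *ᵥ mpcTraj f x u i + u i ⬝ᵥ R *ᵥ u i)
    + mpcTraj f x u N ⬝ᵥ P *ᵥ mpcTraj f x u N

section FiniteHorizon

variable {X U G : Type*}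

/-- State trajectory of the controlled system `x⁺ = f x u` on arbitrary state and control types,
used to treat the finite-horizon problem without the linear structure of `ℝⁿ`. As in `mpcTraj`, the
control sequence is infinite. -/
def stateTraj (f : X → U → X) (x : X) (u : ℕ → U) : ℕ → X
  | 0 => x
  | k + 1 => f (stateTraj f x u k) (u k)

/-- Finite-horizon cost with stage cost `ℓ` and terminal cost `V`, the abstract form of the MPC
cost. The infinite sequence `u` encodes a control sequence of length `N` through its first `N`
terms. -/
def horizonCost [AddCommMonoid G] (f : X → U → X) (ℓ : X → U → G) (V : X → G) (N : ℕ) (x : X)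
    (u : ℕ → U) : G :=
  ∑ k ∈ range N, ℓ (stateTraj f x u k) (u k) + V (stateTraj f x u N)

theorem stateTraj_congr (f : X → U → X) (x : X) {u v : ℕ → U} {k : ℕ}
    (h : ∀ i < k, u i = v i) : stateTraj f x u k = stateTraj f x v k := by
  induction k with
  | zero => rfl
  | succ k ih =>
    rw [stateTraj, stateTraj, ih fun i hi => h i (hi.trans k.lt_succ_self), h k k.lt_succ_self]

theorem stateTraj_succ' (f : X → U → X) (x : X) (u : ℕ → U) (k : ℕ) :
    stateTraj f x u (k + 1) = stateTraj f (f x (u 0)) (fun i => u (i + 1)) k := by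
  induction k with
  | zero => rfl
  | succ k ih => rw [stateTraj, ih, stateTraj]

section AddCommMonoid

variable [AddCommMonoid G] (f : X → U → X) (ℓ : X → U → G) (V : X → G)

theorem horizonCost_congr (x : X) {u v : ℕ → U} {N : ℕ} (h : ∀ i < N, u i = v i) :
    horizonCost f ℓ V N x u = horizonCost f ℓ V N x v := by
  have hstage : ∀ k ∈ range N, ℓ (stateTraj f x u k) (u k) = ℓ (stateTraj f x v k) (v k) := by
    intro k hk
    have hkN : k < N := mem_range.mp hk
    rw [stateTraj_congr f x fun i hi => h i (hi.trans hkN), h k hkN]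
  rw [horizonCost, horizonCost, sum_congr rfl hstage, stateTraj_congr f x h]

theorem horizonCost_succ' (N : ℕ) (x : X) (u : ℕ → U) :
    horizonCost f ℓ V (N + 1) x u =
      ℓ x (u 0) + horizonCost f ℓ V N (f x (u 0)) (fun i => u (i + 1)) := by
  rw [horizonCost, horizonCost, sum_range_succ', add_comm (∑ k ∈ range N, _), add_assoc]
  simp only [stateTraj_succ']
  rfl

variable [Preorder G] [IsOrderedAddMonoid G] {f ℓ V}

theorem horizonCost_succ_le {N : ℕ} {x : X} {u : ℕ → U}
    (h : ℓ (stateTraj f x u N) (u N) + V (f (stateTraj f x u N) (u N)) ≤ V (stateTraj f x u N)) :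
    horizonCost f ℓ V (N + 1) x u ≤ horizonCost f ℓ V N x u := by
  rw [horizonCost, sum_range_succ, add_assoc, stateTraj]
  exact add_le_add_right h _

theorem mpc_shifted_cost_descent_general {N : ℕ} (hN : 1 ≤ N) {x : X} {u : ℕ → U} {c : U}
    (hc : ℓ (stateTraj f x u N) c + V (f (stateTraj f x u N) c) ≤ V (stateTraj f x u N)) :
    ℓ x (u 0) + horizonCost f ℓ V N (f x (u 0)) (fun i => if i + 1 < N then u (i + 1) else c) ≤
      horizonCost f ℓ V N x u := by
  obtain ⟨M, rfl⟩ := Nat.exists_eq_add_of_le' hN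
  set v : ℕ → U := fun i => if i + 1 < M + 1 then u (i + 1) else c
  have hv_tail : ∀ i < M, v i = u (i + 1) := fun i hi => if_pos (Nat.succ_lt_succ hi)
  have hv_last : v M = c := if_neg (lt_irrefl _)
  have hterminal : stateTraj f (f x (u 0)) v M = stateTraj f x u (M + 1) := by
    rw [stateTraj_succ', stateTraj_congr f _ hv_tail]
  calc
    ℓ x (u 0) + horizonCost f ℓ V (M + 1) (f x (u 0)) v
        ≤ ℓ x (u 0) + horizonCost f ℓ V M (f x (u 0)) v := by
      refine add_le_add_right (horizonCost_succ_le ?_) _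
      rwa [hterminal, hv_last]
    _ = ℓ x (u 0) + horizonCost f ℓ V M (f x (u 0)) (fun i => u (i + 1)) := by
      rw [horizonCost_congr f ℓ V _ hv_tail]
    _ = horizonCost f ℓ V (M + 1) x u := (horizonCost_succ' f ℓ V M x u).symm

end AddCommMonoid

end FiniteHorizon

section Quadratic

variable {n m : ℕ} (f : (Fin n → ℝ) → (Fin m → ℝ) → (Fin n → ℝ))

theorem mpcTraj_eq_stateTraj (x : Fin n → ℝ) (u : ℕ → Fin m → ℝ) :
    mpcTraj f x u = stateTraj f x u := by
  funext k
  induction k with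
  | zero => rfl
  | succ k ih => rw [mpcTraj, stateTraj, ih]

theorem mpcCost_eq_horizonCost (N : ℕ) (Q P : Matrix (Fin n) (Fin n) ℝ)
    (R : Matrix (Fin m) (Fin m) ℝ) (x : Fin n → ℝ) (u : ℕ → Fin m → ℝ) :
    mpcCost N f Q P R x u =
      horizonCost f (fun z w => z ⬝ᵥ Q *ᵥ z + w ⬝ᵥ R *ᵥ w) (fun z => z ⬝ᵥ P *ᵥ z) N x u := by
  rw [mpcCost, horizonCost, mpcTraj_eq_stateTraj]

end Quadratic

/-- **Cost-descent inequality** (inequality (42) in the proof of Theorem 2): if the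
terminal control law `κ` satisfies the terminal Lyapunov decrease condition on
`X_f = {x : xᵀ P x ≤ α}` and the predicted terminal state `x̄_N` of the sequence `u`
lies in `X_f`, then the shifted sequence `u' = (u_1,…,u_{N−1},κ(x̄_N))` from the
successor state `x⁺ = f(x,u_0)` satisfies `J(x⁺,u') ≤ J(x,u) − (xᵀ Q x + u_0ᵀ R u_0)`. -/
theorem mpc_shifted_cost_descent {n m N : ℕ} (hN : 1 ≤ N)
    (f : (Fin n → ℝ) → (Fin m → ℝ) → (Fin n → ℝ))
    (Q P : Matrix (Fin n) (Fin n) ℝ) (R : Matrix (Fin m) (Fin m) ℝ)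
    (hQ : Q.PosSemidef) (hR : R.PosSemidef) (hP : P.PosSemidef)
    (α : ℝ) (hα : 0 ≤ α)
    (κ : (Fin n → ℝ) → (Fin m → ℝ))
    (hκ : ∀ z : Fin n → ℝ, z ⬝ᵥ P *ᵥ z ≤ α →
      f z (κ z) ⬝ᵥ P *ᵥ f z (κ z) - z ⬝ᵥ P *ᵥ z
        ≤ -(z ⬝ᵥ Q *ᵥ z + κ z ⬝ᵥ R *ᵥ κ z))
    (x : Fin n → ℝ) (u : ℕ → Fin m → ℝ)
    (hterm : mpcTraj f x u N ⬝ᵥ P *ᵥ mpcTraj f x u N ≤ α) :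
    mpcCost N f Q P R (f x (u 0))
        (fun i => if i + 1 < N then u (i + 1) else κ (mpcTraj f x u N))
      ≤ mpcCost N f Q P R x u - (x ⬝ᵥ Q *ᵥ x + u 0 ⬝ᵥ R *ᵥ u 0) := by
  rw [le_sub_iff_add_le', mpcCost_eq_horizonCost, mpcCost_eq_horizonCost]
  rw [mpcTraj_eq_stateTraj] at hterm ⊢
  exact mpc_shifted_cost_descent_general (ℓ := fun z w => z ⬝ᵥ Q *ᵥ z + w ⬝ᵥ R *ᵥ w)
    (V := fun z => z ⬝ᵥ P *ᵥ z) hN (by linarith [hκ _ hterm])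
end

section
/- Suppose the control sequence u = (u_0, …, u_{N−1}) is feasible from x, i.e., x̄_i ∈ X for i = 0, …, N−1, u_i ∈ U for i = 0, …, N−1, and x̄_N ∈ X_f. Then the shifted sequence u′ = (u_1, …, u_{N−1}, κ(x̄_N)) is feasible from the successor state x⁺ = f(x, u_0): its predicted states x̄_1, …, x̄_N lie in X, all its inputs lie in U, and its terminal state f(x̄_N, κ(x̄_N)) lies in X_f. -/
/-!
Delete the first input from a feasible sequence and append the terminal law evaluated at the old
terminal state. The new prediction is then the tail of the old one followed by one step of the
terminal closed loop, so the shifted sequence is feasible as soon as the terminal set is invariant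
under that loop. Invariance holds for any sublevel set of a function that does not increase on it,
and the Lyapunov decrease condition provides this because the stage cost is nonnegative.
-/

open Matrix

theorem mapsTo_sublevel_of_sub_le_neg {Z G : Type*} [AddCommGroup G] [Preorder G] [AddLeftMono G]
    {F : Z → Z} {V ℓ : Z → G} {α : G} (hℓ : ∀ z, V z ≤ α → 0 ≤ ℓ z)
    (hV : ∀ z, V z ≤ α → V (F z) - V z ≤ -ℓ z) :
    Set.MapsTo F {z | V z ≤ α} {z | V z ≤ α} := fun z hz =>
  calc V (F z) ≤ V z := sub_nonpos.1 ((hV z hz).trans (neg_nonpos.2 (hℓ z hz)))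
    _ ≤ α := hz

section ControlSystem

variable {S I : Type*}

/-- State at time `i` of the control system `x⁺ = f x u` on arbitrary state and input types,
started at `x` and driven by the inputs `u 0, …, u (i - 1)`. -/
def controlTraj (f : S → I → S) (x : S) (u : ℕ → I) : ℕ → S
  | 0 => x
  | i + 1 => f (controlTraj f x u i) (u i)

/-- Feasibility of the inputs `u 0, …, u (N - 1)` from the state `x`, for the state constraint set
`X`, the input constraint set `U` and the terminal set `Xf`. Sequences are indexed by `ℕ`; the
inputs from time `N` on are irrelevant. -/
structure IsFeasibleInput (f : S → I → S) (X : Set S) (U : Set I) (Xf : Set S) (N : ℕ)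
    (x : S) (u : ℕ → I) : Prop where
  state_mem : ∀ i < N, controlTraj f x u i ∈ X
  input_mem : ∀ i < N, u i ∈ U
  terminal_mem : controlTraj f x u N ∈ Xf

/-- The shifted input sequence `u 1, …, u (N - 1), w` of horizon `N`, from which a receding-horizon
argument builds the next prediction. It is continued by `w` after time `N - 1`. -/
def shiftedInput (N : ℕ) (u : ℕ → I) (w : I) : ℕ → I :=
  fun j => if j + 1 < N then u (j + 1) else w

theorem controlTraj_of_eq_shift (f : S → I → S) (x : S) {u v : ℕ → I} {i : ℕ}
    (h : ∀ j < i, v j = u (j + 1)) :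
    controlTraj f (f x (u 0)) v i = controlTraj f x u (i + 1) := by
  induction i with
  | zero => rfl
  | succ i ih =>
    calc controlTraj f (f x (u 0)) v (i + 1)
        = f (controlTraj f (f x (u 0)) v i) (v i) := rfl
      _ = f (controlTraj f x u (i + 1)) (u (i + 1)) := by
          rw [ih fun j hj => h j (hj.trans i.lt_succ_self), h i i.lt_succ_self]

theorem controlTraj_shiftedInput (f : S → I → S) (x : S) (u : ℕ → I) (w : I) {N i : ℕ}
    (hi : i < N) :
    controlTraj f (f x (u 0)) (shiftedInput N u w) i = controlTraj f x u (i + 1) :=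
  controlTraj_of_eq_shift f x fun _ hj => if_pos (by omega)

theorem controlTraj_shiftedInput_horizon (f : S → I → S) (x : S) (u : ℕ → I) (w : I) {N : ℕ}
    (hN : 1 ≤ N) :
    controlTraj f (f x (u 0)) (shiftedInput N u w) N = f (controlTraj f x u N) w := by
  obtain ⟨k, rfl⟩ := Nat.exists_eq_add_of_le' hN
  have hlast : shiftedInput (k + 1) u w k = w := if_neg (lt_irrefl _)
  rw [controlTraj, controlTraj_shiftedInput f x u w k.lt_succ_self, hlast]

theorem mpc_recursive_feasibility_general {f : S → I → S} {X Xf : Set S} {U : Set I} {N : ℕ}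
    {κ : S → I} {x : S} {u : ℕ → I} (hN : 1 ≤ N) (hXfX : Xf ⊆ X) (hκU : Set.MapsTo κ Xf U)
    (hκXf : Set.MapsTo (fun z => f z (κ z)) Xf Xf) (hu : IsFeasibleInput f X U Xf N x u) :
    IsFeasibleInput f X U Xf N (f x (u 0)) (shiftedInput N u (κ (controlTraj f x u N))) where
  state_mem i hi := by
    rw [controlTraj_shiftedInput f x u _ hi]
    rcases (Nat.add_one_le_of_lt hi).lt_or_eq with hlt | hlast
    · exact hu.state_mem (i + 1) hlt
    · rw [hlast]
      exact hXfX hu.terminal_mem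
  input_mem i _ := by
    rw [shiftedInput]
    split_ifs with hlt
    · exact hu.input_mem (i + 1) hlt
    · exact hκU hu.terminal_mem
  terminal_mem := by
    rw [controlTraj_shiftedInput_horizon f x u _ hN]
    exact hκXf hu.terminal_mem

end ControlSystem

theorem mpcTraj_eq_controlTraj {n m : ℕ} (f : (Fin n → ℝ) → (Fin m → ℝ) → (Fin n → ℝ))
    (x : Fin n → ℝ) (u : ℕ → Fin m → ℝ) : mpcTraj f x u = controlTraj f x u := by
  funext i
  induction i with
  | zero => rfl
  | succ i ih => rw [mpcTraj, controlTraj, ih]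

theorem quadraticStageCost_nonneg {n m : Type*} [Fintype n] [Fintype m] {Q : Matrix n n ℝ}
    {R : Matrix m m ℝ} (hQ : Q.PosSemidef) (hR : R.PosSemidef) (x : n → ℝ) (u : m → ℝ) :
    0 ≤ x ⬝ᵥ Q *ᵥ x + u ⬝ᵥ R *ᵥ u :=
  add_nonneg (hQ.dotProduct_mulVec_nonneg x) (hR.dotProduct_mulVec_nonneg u)

/-- **Recursive feasibility** (proof of Theorem 2): if `u = (u_0,…,u_{N−1})` is feasible
from `x` — predicted states in `X = {x : g(x) ≤ 0}`, inputs in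
`U = {u : u_min ≤ u ≤ u_max}`, terminal state in `X_f = {x : xᵀ P x ≤ α} ⊆ X` —
and the terminal law `κ` satisfies the terminal Lyapunov decrease condition and maps
`X_f` into `U`, then the shifted sequence `u' = (u_1,…,u_{N−1},κ(x̄_N))` is feasible
from the successor state `x⁺ = f(x,u_0)`: its predicted states `x̄_1,…,x̄_N` lie in `X`,
all of its inputs lie in `U`, and its terminal state `f(x̄_N, κ(x̄_N))` lies in `X_f`. -/
theorem mpc_recursive_feasibility {n m p N : ℕ} (hN : 1 ≤ N)
    (f : (Fin n → ℝ) → (Fin m → ℝ) → (Fin n → ℝ))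
    (Q P : Matrix (Fin n) (Fin n) ℝ) (R : Matrix (Fin m) (Fin m) ℝ)
    (hQ : Q.PosSemidef) (hR : R.PosSemidef) (hP : P.PosSemidef)
    (g : (Fin n → ℝ) → (Fin p → ℝ)) (umin umax : Fin m → ℝ)
    (α : ℝ) (hα : 0 ≤ α)
    (hXfX : ∀ z : Fin n → ℝ, z ⬝ᵥ P *ᵥ z ≤ α → g z ≤ 0)
    (κ : (Fin n → ℝ) → (Fin m → ℝ))
    (hκ : ∀ z : Fin n → ℝ, z ⬝ᵥ P *ᵥ z ≤ α →
      f z (κ z) ⬝ᵥ P *ᵥ f z (κ z) - z ⬝ᵥ P *ᵥ z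
        ≤ -(z ⬝ᵥ Q *ᵥ z + κ z ⬝ᵥ R *ᵥ κ z))
    (hκU : ∀ z : Fin n → ℝ, z ⬝ᵥ P *ᵥ z ≤ α → umin ≤ κ z ∧ κ z ≤ umax)
    (x : Fin n → ℝ) (u : ℕ → Fin m → ℝ)
    (hstate : ∀ i < N, g (mpcTraj f x u i) ≤ 0)
    (hinput : ∀ i < N, umin ≤ u i ∧ u i ≤ umax)
    (hterm : mpcTraj f x u N ⬝ᵥ P *ᵥ mpcTraj f x u N ≤ α) :
    (∀ i < N,
        g (mpcTraj f (f x (u 0))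
            (fun j => if j + 1 < N then u (j + 1) else κ (mpcTraj f x u N)) i) ≤ 0) ∧
    (∀ i < N,
        umin ≤ (fun j => if j + 1 < N then u (j + 1) else κ (mpcTraj f x u N)) i ∧
          (fun j => if j + 1 < N then u (j + 1) else κ (mpcTraj f x u N)) i ≤ umax) ∧
    (mpcTraj f (f x (u 0))
          (fun j => if j + 1 < N then u (j + 1) else κ (mpcTraj f x u N)) N ⬝ᵥ
        P *ᵥ
        mpcTraj f (f x (u 0))
          (fun j => if j + 1 < N then u (j + 1) else κ (mpcTraj f x u N)) N) ≤ α := by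
  have hinv : Set.MapsTo (fun z => f z (κ z)) {z | z ⬝ᵥ P *ᵥ z ≤ α} {z | z ⬝ᵥ P *ᵥ z ≤ α} :=
    mapsTo_sublevel_of_sub_le_neg (fun z _ => quadraticStageCost_nonneg hQ hR z (κ z)) hκ
  simp only [mpcTraj_eq_controlTraj] at hstate hterm ⊢
  obtain ⟨hstate', hinput', hterm'⟩ := mpc_recursive_feasibility_general
    (X := {z | g z ≤ 0}) (U := Set.Icc umin umax) hN hXfX hκU hinv ⟨hstate, hinput, hterm⟩
  exact ⟨hstate', hinput', hterm'⟩
end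

section
/- If the control sequence u = (u_0, …, u_{N−1}) is feasible from x (i.e., u ∈ 𝒰(x)), then the optimal value at the successor state satisfies J*(f(x, u_0)) ≤ J(x, u) − (xᵀ Q x + u_0ᵀ R u_0). -/
open Matrix

/-- Feasible set `𝒰(x)`: sequences whose predicted states satisfy the state
constraints `g(x̄_i) ≤ 0`, whose inputs satisfy `u_min ≤ u_i ≤ u_max` for
`i = 0,…,N−1`, and whose terminal state lies in `X_f = {x : xᵀ P x ≤ α}`. -/
def mpcFeasible {n m p : ℕ} (N : ℕ)
    (f : (Fin n → ℝ) → (Fin m → ℝ) → (Fin n → ℝ))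
    (P : Matrix (Fin n) (Fin n) ℝ)
    (g : (Fin n → ℝ) → (Fin p → ℝ)) (umin umax : Fin m → ℝ) (α : ℝ)
    (x : Fin n → ℝ) : Set (ℕ → Fin m → ℝ) :=
  {u | (∀ i < N, g (mpcTraj f x u i) ≤ 0) ∧
       (∀ i < N, umin ≤ u i ∧ u i ≤ umax) ∧
       mpcTraj f x u N ⬝ᵥ P *ᵥ mpcTraj f x u N ≤ α}

/-- Optimal value function `J*(x) = inf { J(x,u) : u ∈ 𝒰(x) }`. -/
noncomputable def mpcValue {n m p : ℕ} (N : ℕ)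
    (f : (Fin n → ℝ) → (Fin m → ℝ) → (Fin n → ℝ))
    (Q P : Matrix (Fin n) (Fin n) ℝ) (R : Matrix (Fin m) (Fin m) ℝ)
    (g : (Fin n → ℝ) → (Fin p → ℝ)) (umin umax : Fin m → ℝ) (α : ℝ)
    (x : Fin n → ℝ) : ℝ :=
  sInf (mpcCost N f Q P R x '' mpcFeasible N f P g umin umax α x)

/-!
Dropping the first input of a feasible sequence leaves a feasible sequence of horizon `N - 1` from
the successor state, whose cost is smaller by exactly the first stage cost. Appending the terminal
control `κ (x̄_N)` restores the horizon `N`: this is feasible because the terminal set is invariant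
under `κ`, and it does not increase the cost, because the added stage cost is paid for by the
decrease of the terminal cost.
-/

/-- A constrained optimal control problem, with the horizon and the initial state left open.
Costs are real-valued functions on arbitrary state and input types. -/
structure OptimalControlProblem (S A : Type*) where
  step : S → A → S
  stageCost : S → A → ℝ
  terminalCost : S → ℝ
  stateSet : Set S
  inputSet : Set A
  terminalSet : Set S

namespace OptimalControlProblem

open Function (update)

variable {S A : Type*} (C : OptimalControlProblem S A)

/-- The state trajectory from `x` under the inputs `u`. -/
def traj (x : S) (u : ℕ → A) : ℕ → S
  | 0 => x
  | i + 1 => C.step (traj x u i) (u i)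

/-- The cost of the inputs `u` from `x` over the horizon `N`; only `u 0, …, u (N - 1)` matter. -/
def cost (N : ℕ) (x : S) (u : ℕ → A) : ℝ :=
  ∑ i ∈ Finset.range N, C.stageCost (C.traj x u i) (u i) + C.terminalCost (C.traj x u N)

/-- The input sequences satisfying all constraints from `x` over the horizon `N`. The state
constraint is imposed at times `0, …, N - 1` and the terminal constraint at time `N`. -/
def feasible (N : ℕ) (x : S) : Set (ℕ → A) :=
  {u | (∀ i < N, C.traj x u i ∈ C.stateSet) ∧ (∀ i < N, u i ∈ C.inputSet) ∧
    C.traj x u N ∈ C.terminalSet}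

/-- The optimal value over the horizon `N`, as a real infimum: it is `0` by convention where no
input sequence is feasible or the cost is unbounded below. -/
noncomputable def value (N : ℕ) (x : S) : ℝ :=
  sInf (C.cost N x '' C.feasible N x)

/-- The terminal conditions of predictive control: the terminal states satisfy the state
constraint, and on them `κ` is an admissible feedback that leaves the terminal set invariant and
decreases the terminal cost by at least the stage cost. -/
structure IsTerminalControl (κ : S → A) : Prop where
  terminalSet_subset : C.terminalSet ⊆ C.stateSet
  mapsTo_inputSet : Set.MapsTo κ C.terminalSet C.inputSet
  mapsTo_terminalSet : Set.MapsTo (fun z => C.step z (κ z)) C.terminalSet C.terminalSet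
  stageCost_add_le : ∀ z ∈ C.terminalSet,
    C.stageCost z (κ z) + C.terminalCost (C.step z (κ z)) ≤ C.terminalCost z

variable {C} {κ : S → A} {N : ℕ} {x : S} {u : ℕ → A}

theorem traj_succ_eq_traj_tail (i : ℕ) :
    C.traj x u (i + 1) = C.traj (C.step x (u 0)) (fun j => u (j + 1)) i := by
  induction i with
  | zero => rfl
  | succ i ih => rw [traj, ih, traj]

theorem cost_succ_eq_stageCost_add_cost_tail :
    C.cost (N + 1) x u =
      C.stageCost x (u 0) + C.cost N (C.step x (u 0)) (fun j => u (j + 1)) := by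
  simp only [cost, Finset.sum_range_succ', traj_succ_eq_traj_tail]
  rw [traj]
  ring

theorem tail_mem_feasible (hu : u ∈ C.feasible (N + 1) x) :
    (fun j => u (j + 1)) ∈ C.feasible N (C.step x (u 0)) := by
  obtain ⟨hstate, hinput, hterminal⟩ := hu
  refine ⟨fun i hi => ?_, fun i hi => hinput (i + 1) (by lia), ?_⟩
  · rw [← traj_succ_eq_traj_tail]
    exact hstate (i + 1) (by lia)
  · rwa [← traj_succ_eq_traj_tail]

theorem traj_update_of_le {i : ℕ} (hi : i ≤ N) (a : A) :
    C.traj x (update u N a) i = C.traj x u i := by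
  induction i with
  | zero => rfl
  | succ i ih =>
    rw [traj, traj, ih (by lia), Function.update_of_ne (by lia)]

theorem traj_update_succ (a : A) :
    C.traj x (update u N a) (N + 1) = C.step (C.traj x u N) a := by
  rw [traj, traj_update_of_le le_rfl, Function.update_self]

theorem cost_succ_update (a : A) :
    C.cost (N + 1) x (update u N a) =
      ∑ i ∈ Finset.range N, C.stageCost (C.traj x u i) (u i) +
        (C.stageCost (C.traj x u N) a + C.terminalCost (C.step (C.traj x u N) a)) := by
  have hstage : ∀ i ∈ Finset.range N,
      C.stageCost (C.traj x (update u N a) i) (update u N a i) =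
        C.stageCost (C.traj x u i) (u i) := fun i hi => by
    have hi : i < N := Finset.mem_range.mp hi
    rw [traj_update_of_le hi.le, Function.update_of_ne hi.ne]
  rw [cost, Finset.sum_range_succ, Finset.sum_congr rfl hstage, traj_update_of_le le_rfl,
    Function.update_self, traj_update_succ, add_assoc]

theorem IsTerminalControl.update_mem_feasible (hκ : C.IsTerminalControl κ)
    (hu : u ∈ C.feasible N x) :
    update u N (κ (C.traj x u N)) ∈ C.feasible (N + 1) x := by
  obtain ⟨hstate, hinput, hterminal⟩ := hu
  refine ⟨fun i hi => ?_, fun i hi => ?_, ?_⟩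
  · rw [traj_update_of_le (Nat.le_of_lt_succ hi)]
    rcases Nat.lt_succ_iff_lt_or_eq.mp hi with hi | rfl
    · exact hstate i hi
    · exact hκ.terminalSet_subset hterminal
  · rcases Nat.lt_succ_iff_lt_or_eq.mp hi with hi | rfl
    · rw [Function.update_of_ne hi.ne]
      exact hinput i hi
    · rw [Function.update_self]
      exact hκ.mapsTo_inputSet hterminal
  · rw [traj_update_succ]
    exact hκ.mapsTo_terminalSet hterminal

theorem IsTerminalControl.cost_succ_update_le (hκ : C.IsTerminalControl κ)
    (hu : C.traj x u N ∈ C.terminalSet) :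
    C.cost (N + 1) x (update u N (κ (C.traj x u N))) ≤ C.cost N x u := by
  rw [cost_succ_update, cost]
  gcongr
  exact hκ.stageCost_add_le _ hu

theorem IsTerminalControl.value_succ_le_cost (hκ : C.IsTerminalControl κ)
    (hbdd : BddBelow (C.cost (N + 1) x '' C.feasible (N + 1) x)) (hu : u ∈ C.feasible N x) :
    C.value (N + 1) x ≤ C.cost N x u :=
  (csInf_le hbdd (Set.mem_image_of_mem _ (hκ.update_mem_feasible hu))).trans
    (hκ.cost_succ_update_le hu.2.2)

theorem bddBelow_cost_image_feasible
    (hstage : ∀ z ∈ C.stateSet, ∀ a ∈ C.inputSet, 0 ≤ C.stageCost z a)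
    (hterminal : ∀ z ∈ C.terminalSet, 0 ≤ C.terminalCost z) :
    BddBelow (C.cost N x '' C.feasible N x) := by
  refine ⟨0, ?_⟩
  rintro _ ⟨u, ⟨hX, hU, hXf⟩, rfl⟩
  refine add_nonneg (Finset.sum_nonneg fun i hi => ?_) (hterminal _ hXf)
  have hi : i < N := Finset.mem_range.mp hi
  exact hstage _ (hX i hi) _ (hU i hi)

theorem IsTerminalControl.of_terminalSet_eq_sublevel {α : ℝ}
    (hsublevel : C.terminalSet = {z | C.terminalCost z ≤ α})
    (hstage : ∀ z ∈ C.stateSet, ∀ a ∈ C.inputSet, 0 ≤ C.stageCost z a)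
    (hsubset : C.terminalSet ⊆ C.stateSet) (hinput : Set.MapsTo κ C.terminalSet C.inputSet)
    (hdecrease : ∀ z ∈ C.terminalSet,
      C.stageCost z (κ z) + C.terminalCost (C.step z (κ z)) ≤ C.terminalCost z) :
    C.IsTerminalControl κ where
  terminalSet_subset := hsubset
  mapsTo_inputSet := hinput
  mapsTo_terminalSet z hz := by
    have hnonincreasing : C.terminalCost (C.step z (κ z)) ≤ C.terminalCost z :=
      (le_add_of_nonneg_left (hstage z (hsubset hz) _ (hinput hz))).trans (hdecrease z hz)
    rw [hsublevel] at hz ⊢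
    exact hnonincreasing.trans hz
  stageCost_add_le := hdecrease

end OptimalControlProblem

theorem mpc_value_descent_general {S A : Type*} {C : OptimalControlProblem S A} {κ : S → A}
    (hκ : C.IsTerminalControl κ) {N : ℕ} (hN : 1 ≤ N) {x : S} {u : ℕ → A}
    (hbdd : BddBelow (C.cost N (C.step x (u 0)) '' C.feasible N (C.step x (u 0))))
    (hu : u ∈ C.feasible N x) :
    C.value N (C.step x (u 0)) ≤ C.cost N x u - C.stageCost x (u 0) := by
  obtain ⟨k, rfl⟩ := Nat.exists_eq_add_of_le' hN
  rw [OptimalControlProblem.cost_succ_eq_stageCost_add_cost_tail, add_sub_cancel_left]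
  exact hκ.value_succ_le_cost hbdd (OptimalControlProblem.tail_mem_feasible hu)

section Quadratic

variable {n m p : ℕ}

/-- The predictive control problem with quadratic costs, state constraint `g z ≤ 0`, box input
constraints and a sublevel set of the terminal cost as terminal set. Its trajectory, cost, feasible
set and value are `mpcTraj`, `mpcCost`, `mpcFeasible` and `mpcValue`. -/
def quadraticMPC (f : (Fin n → ℝ) → (Fin m → ℝ) → (Fin n → ℝ))
    (Q P : Matrix (Fin n) (Fin n) ℝ) (R : Matrix (Fin m) (Fin m) ℝ)
    (g : (Fin n → ℝ) → (Fin p → ℝ)) (umin umax : Fin m → ℝ) (α : ℝ) :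
    OptimalControlProblem (Fin n → ℝ) (Fin m → ℝ) where
  step := f
  stageCost z a := z ⬝ᵥ Q *ᵥ z + a ⬝ᵥ R *ᵥ a
  terminalCost z := z ⬝ᵥ P *ᵥ z
  stateSet := {z | g z ≤ 0}
  inputSet := Set.Icc umin umax
  terminalSet := {z | z ⬝ᵥ P *ᵥ z ≤ α}

variable {f : (Fin n → ℝ) → (Fin m → ℝ) → (Fin n → ℝ)}
  {Q P : Matrix (Fin n) (Fin n) ℝ} {R : Matrix (Fin m) (Fin m) ℝ}
  {g : (Fin n → ℝ) → (Fin p → ℝ)} {umin umax : Fin m → ℝ} {α : ℝ}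

theorem mpcTraj_eq_traj (x : Fin n → ℝ) (u : ℕ → Fin m → ℝ) :
    mpcTraj f x u = (quadraticMPC f Q P R g umin umax α).traj x u := by
  funext i
  induction i with
  | zero => rfl
  | succ i ih => rw [mpcTraj, ih]; rfl

theorem mpcCost_eq_cost (N : ℕ) (x : Fin n → ℝ) :
    mpcCost N f Q P R x = (quadraticMPC f Q P R g umin umax α).cost N x := by
  funext u
  rw [mpcCost, mpcTraj_eq_traj]
  rfl

theorem mpcFeasible_eq_feasible (N : ℕ) (x : Fin n → ℝ) :
    mpcFeasible N f P g umin umax α x =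
      (quadraticMPC f Q P R g umin umax α).feasible N x := by
  ext u
  rw [mpcFeasible, Set.mem_ofPred_eq, mpcTraj_eq_traj]
  rfl

theorem mpcValue_eq_value (N : ℕ) (x : Fin n → ℝ) :
    mpcValue N f Q P R g umin umax α x = (quadraticMPC f Q P R g umin umax α).value N x := by
  rw [mpcValue, mpcCost_eq_cost, mpcFeasible_eq_feasible]
  rfl

theorem dotProduct_mulVec_self_nonneg {ι : Type*} [Fintype ι] {M : Matrix ι ι ℝ}
    (hM : M.PosSemidef) (z : ι → ℝ) : 0 ≤ z ⬝ᵥ M *ᵥ z := by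
  simpa only [star_trivial] using hM.dotProduct_mulVec_nonneg z

theorem quadraticMPC_stageCost_nonneg (hQ : Q.PosSemidef) (hR : R.PosSemidef)
    (z : Fin n → ℝ) (a : Fin m → ℝ) :
    0 ≤ (quadraticMPC f Q P R g umin umax α).stageCost z a :=
  add_nonneg (dotProduct_mulVec_self_nonneg hQ z) (dotProduct_mulVec_self_nonneg hR a)

theorem isTerminalControl_quadraticMPC {κ : (Fin n → ℝ) → (Fin m → ℝ)}
    (hQ : Q.PosSemidef) (hR : R.PosSemidef)
    (hXfX : ∀ z : Fin n → ℝ, z ⬝ᵥ P *ᵥ z ≤ α → g z ≤ 0)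
    (hκ : ∀ z : Fin n → ℝ, z ⬝ᵥ P *ᵥ z ≤ α →
      f z (κ z) ⬝ᵥ P *ᵥ f z (κ z) - z ⬝ᵥ P *ᵥ z
        ≤ -(z ⬝ᵥ Q *ᵥ z + κ z ⬝ᵥ R *ᵥ κ z))
    (hκU : ∀ z : Fin n → ℝ, z ⬝ᵥ P *ᵥ z ≤ α → umin ≤ κ z ∧ κ z ≤ umax) :
    (quadraticMPC f Q P R g umin umax α).IsTerminalControl κ :=
  .of_terminalSet_eq_sublevel rfl (fun z _ a _ => quadraticMPC_stageCost_nonneg hQ hR z a) hXfX hκU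
    fun z hz => by
      change z ⬝ᵥ Q *ᵥ z + κ z ⬝ᵥ R *ᵥ κ z + f z (κ z) ⬝ᵥ P *ᵥ f z (κ z) ≤ z ⬝ᵥ P *ᵥ z
      linarith [hκ z hz]

end Quadratic

/-- **Optimal value descent** (inequality (42) with the optimal value at the successor
state, proof of Theorem 2): under the terminal Lyapunov decrease condition, with `κ`
mapping `X_f` into `U` and `X_f ⊆ X`, any feasible `u ∈ 𝒰(x)` satisfies
`J*(f(x,u_0)) ≤ J(x,u) − (xᵀ Q x + u_0ᵀ R u_0)`. -/
theorem mpc_value_descent {n m p N : ℕ} (hN : 1 ≤ N)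
    (f : (Fin n → ℝ) → (Fin m → ℝ) → (Fin n → ℝ))
    (Q P : Matrix (Fin n) (Fin n) ℝ) (R : Matrix (Fin m) (Fin m) ℝ)
    (hQ : Q.PosSemidef) (hR : R.PosSemidef) (hP : P.PosSemidef)
    (g : (Fin n → ℝ) → (Fin p → ℝ)) (umin umax : Fin m → ℝ)
    (α : ℝ) (hα : 0 ≤ α)
    (hXfX : ∀ z : Fin n → ℝ, z ⬝ᵥ P *ᵥ z ≤ α → g z ≤ 0)
    (κ : (Fin n → ℝ) → (Fin m → ℝ))
    (hκ : ∀ z : Fin n → ℝ, z ⬝ᵥ P *ᵥ z ≤ α →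
      f z (κ z) ⬝ᵥ P *ᵥ f z (κ z) - z ⬝ᵥ P *ᵥ z
        ≤ -(z ⬝ᵥ Q *ᵥ z + κ z ⬝ᵥ R *ᵥ κ z))
    (hκU : ∀ z : Fin n → ℝ, z ⬝ᵥ P *ᵥ z ≤ α → umin ≤ κ z ∧ κ z ≤ umax)
    (x : Fin n → ℝ) (u : ℕ → Fin m → ℝ)
    (hu : u ∈ mpcFeasible N f P g umin umax α x) :
    mpcValue N f Q P R g umin umax α (f x (u 0))
      ≤ mpcCost N f Q P R x u - (x ⬝ᵥ Q *ᵥ x + u 0 ⬝ᵥ R *ᵥ u 0) := by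
  rw [mpcFeasible_eq_feasible (Q := Q) (R := R)] at hu
  rw [mpcValue_eq_value, mpcCost_eq_cost]
  exact mpc_value_descent_general (isTerminalControl_quadraticMPC hQ hR hXfX hκ hκU) hN
    (OptimalControlProblem.bddBelow_cost_image_feasible
      (fun z _ a _ => quadraticMPC_stageCost_nonneg hQ hR z a)
      (fun z _ => dotProduct_mulVec_self_nonneg hP z)) hu
end
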